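/- arXiv:1411.1832 — 4 statements merged into one kernel-verified Lean document; each statement's English description precedes it below -/
import Mathlib

section
/- Let d ≥ 1 and n ≥ 1, and let x, y : Fin n → EuclideanSpace ℝ (Fin d) be injective maps (configurations of n distinct labelled points in ℝ^d). Assume the points of x are not all collinear, i.e. ¬ Collinear ℝ (Set.range x). If for all indices i ≠ j the unit direction vectors agree, ‖y j − y i‖⁻¹ • (y j − y i) = ‖x j − x i‖⁻¹ • (x j − x i), then y is obtained from x by a positive scaling and a translation: there exist a real number c > 0 and a vector v ∈ EuclideanSpace ℝ (Fin d) such that y i = c • x i + v for every i. -/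
/-!
Each `y j - y i` is parallel to `x j - x i`. Fix two points `x a ≠ x b`, write
`y b - y a = c • (x b - x a)`, and set `z i = (y i - y a) - c • (x i - x a)`. The displacements of
`z` are still parallel to those of `x`, and `z` vanishes at `a` and `b`. If `z m ≠ 0`, then every
`x i` with `z i = 0` lies on the line through `x m` in the direction `z m`; as this line contains
`x a` and `x b`, it is the line joining them. Hence as soon as `z` is not identically zero, the
points where it vanishes and those where it does not all lie on the line through `x a` and `x b`.
-/

section Affine

variable {K V P ι : Type*} [DivisionRing K] [AddCommGroup V] [Module K V] [AddTorsor V P]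

theorem collinear_of_subset_affineSpan {s t : Set P} (hs : Collinear K s)
    (hts : t ⊆ affineSpan K s) : Collinear K t := by
  have hspan : vectorSpan K t ≤ vectorSpan K s :=
    (vectorSpan_mono K hts).trans_eq (direction_affineSpan K s)
  exact (Submodule.rank_mono hspan).trans hs

theorem nontrivial_of_not_collinear {s : Set P} (hs : ¬ Collinear K s) : s.Nontrivial := by
  rw [← Set.not_subsingleton_iff]
  exact fun hsub ↦ hs (hsub.induction_on (collinear_empty K P) (collinear_singleton K))

theorem collinear_insert_image_zeros {x : ι → P} {z : ι → V} {m : ι}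
    (hz : ∀ i, z i - z m ∈ K ∙ (x i -ᵥ x m)) (hm : z m ≠ 0) :
    Collinear K (insert (x m) (x '' {i | z i = 0})) := by
  rw [collinear_iff_of_mem (Set.mem_insert _ _)]
  refine ⟨z m, ?_⟩
  rintro _ (rfl | ⟨i, hi : z i = 0, rfl⟩)
  · exact ⟨0, by simp⟩
  · obtain ⟨l, hl : l • (x i -ᵥ x m) = z i - z m⟩ := Submodule.mem_span_singleton.mp (hz i)
    rw [hi, zero_sub] at hl
    have hl0 : l ≠ 0 := by
      rintro rfl
      exact hm (by simpa using hl)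
    refine ⟨-l⁻¹, ?_⟩
    rw [neg_smul, ← smul_neg, ← hl, inv_smul_smul₀ hl0, vsub_vadd]

theorem eq_zero_of_not_collinear_range {x : ι → P} {z : ι → V}
    (hx : ¬ Collinear K (Set.range x)) (hz : ∀ i j, z j - z i ∈ K ∙ (x j -ᵥ x i))
    {a b : ι} (hab : x a ≠ x b) (ha : z a = 0) (hb : z b = 0) : z = 0 := by
  by_contra hne
  obtain ⟨m, hm⟩ := Function.ne_iff.mp hne
  have mem_line {k : ι} (hk : z k ≠ 0) {p : P} (hp : p ∈ insert (x k) (x '' {i | z i = 0})) :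
      p ∈ line[K, x a, x b] :=
    (collinear_insert_image_zeros (hz k) hk).mem_affineSpan_of_mem_of_ne
      (.inr ⟨a, ha, rfl⟩) (.inr ⟨b, hb, rfl⟩) hp hab
  refine hx (collinear_of_subset_affineSpan (collinear_pair K (x a) (x b)) ?_)
  rintro _ ⟨i, rfl⟩
  by_cases hi : z i = 0
  · exact mem_line hm (.inr ⟨i, hi, rfl⟩)
  · exact mem_line hi (.inl rfl)

theorem exists_vsub_eq_smul_vsub_of_not_collinear_range {Q : Type*} [AddTorsor V Q]
    {x : ι → P} {y : ι → Q} (hx : ¬ Collinear K (Set.range x))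
    (hxy : ∀ i j, y j -ᵥ y i ∈ K ∙ (x j -ᵥ x i)) :
    ∃ c : K, ∀ i j, y j -ᵥ y i = c • (x j -ᵥ x i) := by
  obtain ⟨_, ⟨a, rfl⟩, _, ⟨b, rfl⟩, hab⟩ := nontrivial_of_not_collinear hx
  obtain ⟨c, hc⟩ := Submodule.mem_span_singleton.mp (hxy a b)
  let z (i : ι) : V := (y i -ᵥ y a) - c • (x i -ᵥ x a)
  have z_sub (i j : ι) : z j - z i = (y j -ᵥ y i) - c • (x j -ᵥ x i) := by
    rw [sub_sub_sub_comm, ← smul_sub, vsub_sub_vsub_cancel_right, vsub_sub_vsub_cancel_right]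
  have hz (i j : ι) : z j - z i ∈ K ∙ (x j -ᵥ x i) := by
    rw [z_sub]
    exact sub_mem (hxy i j) (Submodule.smul_mem _ c (Submodule.mem_span_singleton_self _))
  have z_eq_zero : z = 0 :=
    eq_zero_of_not_collinear_range hx hz hab (by simp [z]) (by simp [z, hc])
  exact ⟨c, fun i j ↦ sub_eq_zero.mp (by simp [← z_sub, z_eq_zero])⟩

end Affine

theorem direction_map_injective_off_collinear_general {K V ι : Type*} [Field K] [LinearOrder K]
    [IsStrictOrderedRing K] [AddCommGroup V] [Module K V] {x y : ι → V}
    (hx : Function.Injective x) (hy : Function.Injective y) (hcol : ¬ Collinear K (Set.range x))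
    (hdir : ∀ i j, i ≠ j → SameRay K (x j - x i) (y j - y i)) :
    ∃ c : K, 0 < c ∧ ∃ v : V, ∀ i, y i = c • x i + v := by
  have hparallel (i j : ι) : y j - y i ∈ K ∙ (x j - x i) := by
    obtain rfl | hij := eq_or_ne i j
    · simp
    · obtain ⟨l, -, hl⟩ := (hdir i j hij).exists_nonneg_left (sub_ne_zero.mpr (hx.ne hij.symm))
      exact Submodule.mem_span_singleton.mpr ⟨l, hl⟩
  obtain ⟨c, hc : ∀ i j, y j - y i = c • (x j - x i)⟩ :=
    exists_vsub_eq_smul_vsub_of_not_collinear_range (y := y) hcol hparallel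
  obtain ⟨_, ⟨a, rfl⟩, _, ⟨b, rfl⟩, hxab⟩ := nontrivial_of_not_collinear hcol
  have hab : a ≠ b := ne_of_apply_ne x hxab
  have hc_ne : c ≠ 0 := by
    rintro rfl
    exact sub_ne_zero.mpr (hy.ne hab.symm) (by simpa using hc a b)
  have hc_pos : 0 < c :=
    (sameRay_smul_right_iff_of_ne (sub_ne_zero.mpr hxab.symm) hc_ne).mp (hc a b ▸ hdir a b hab)
  refine ⟨c, hc_pos, y a - c • x a, fun i ↦ ?_⟩
  rw [add_sub_left_comm, ← smul_sub, ← hc, add_sub_cancel]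

/-- Two injective configurations of `n` points in `ℝ^d` with identical pairwise
unit direction vectors, the first of which is non-collinear, differ by a
positive scaling and a translation. -/
theorem direction_map_injective_off_collinear
    (d n : ℕ) (hd : 1 ≤ d) (hn : 1 ≤ n)
    (x y : Fin n → EuclideanSpace ℝ (Fin d))
    (hx : Function.Injective x) (hy : Function.Injective y)
    (hcol : ¬ Collinear ℝ (Set.range x))
    (hdir : ∀ i j, i ≠ j →
      ‖y j - y i‖⁻¹ • (y j - y i) = ‖x j - x i‖⁻¹ • (x j - x i)) :
    ∃ c : ℝ, 0 < c ∧ ∃ v : EuclideanSpace ℝ (Fin d),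
      ∀ i, y i = c • x i + v :=
  direction_map_injective_off_collinear_general hx hy hcol fun i j hij ↦
    (sameRay_iff_inv_norm_smul_eq_of_ne (sub_ne_zero.mpr (hx.ne hij.symm))
      (sub_ne_zero.mpr (hy.ne hij.symm))).mpr (hdir i j hij).symm
end

section
/- Fix n ≥ 1. Let σ : Fin (n+1) → Fin n be the monotone surjection that is the identity on i < n and sends n to n−1 (that is, σ identifies the two top elements n−1 and n of {0,…,n}). Let P[n] denote the partially ordered set of nonempty finite subsets of Fin (n+1), i.e. {S : Finset (Fin (n+1)) // S.Nonempty} ordered by inclusion, regarded as a category with a unique morphism S ⟶ T exactly when S ⊆ T, and similarly let P[n−1] be the poset category of nonempty finite subsets of Fin n. Then the functor I : P[n] ⥤ P[n−1] induced by the monotone map S ↦ S.image σ is an initial functor (CategoryTheory.Functor.Initial), i.e. for every object S of P[n−1] the costructured arrow category of objects T of P[n] with I(T) ⊆ S is connected; indeed each such category has a terminal object, namely the preimage σ⁻¹(S). -/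
open CategoryTheory

/-- The monotone surjection `{0,…,n} → {0,…,n-1}` that is the identity on
`i < n` and sends `n` to `n-1`. -/
def lastCodegeneracy (n : ℕ) (hn : 1 ≤ n) : Fin (n + 1) → Fin n :=
  fun i => if h : (i : ℕ) < n then ⟨i, h⟩ else ⟨n - 1, Nat.sub_lt hn Nat.one_pos⟩

/-- The poset of nonempty finite subsets of `Fin m`, ordered by inclusion,
regarded as a category. -/
abbrev NonemptySubsetPoset (m : ℕ) := {S : Finset (Fin m) // S.Nonempty}

/-- The map `P_ν[n] → P_ν[n-1]` induced by the monotone surjection identifying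
the two top elements. -/
def imageMap (n : ℕ) (hn : 1 ≤ n) :
    NonemptySubsetPoset (n + 1) → NonemptySubsetPoset n :=
  fun S => ⟨S.1.image (lastCodegeneracy n hn), S.2.image _⟩

theorem imageMap_monotone (n : ℕ) (hn : 1 ≤ n) : Monotone (imageMap n hn) :=
  fun _ _ h => Finset.image_subset_image h

/-- The functor `i_n : P_ν[n] ⥤ P_ν[n-1]`. -/
def imageFunctor (n : ℕ) (hn : 1 ≤ n) :
    NonemptySubsetPoset (n + 1) ⥤ NonemptySubsetPoset n :=
  (imageMap_monotone n hn).functor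

/-!
Image along a surjection `f` is left adjoint to preimage, `f(T) ⊆ S ↔ T ⊆ f⁻¹(S)`; surjectivity is
what keeps `f⁻¹(S)` nonempty. Left adjoints are initial functors, and the counit at `S` is terminal
in the comma category over `S`.
-/

section ImagePreimage

variable {α β : Type*} [DecidableEq β]

/-- The direct image `f_*` on nonempty finite subsets, of which `imageMap` is the case
`f = lastCodegeneracy n hn`. -/
def nonemptyImage (f : α → β) (T : {T : Finset α // T.Nonempty}) :
    {S : Finset β // S.Nonempty} :=
  ⟨T.1.image f, T.2.image f⟩

theorem nonemptyImage_monotone (f : α → β) : Monotone (nonemptyImage f) :=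
  fun _ _ h => Finset.image_subset_image h

variable [Fintype α] {f : α → β}

theorem filter_mem_nonempty (hf : Function.Surjective f) {S : Finset β} (hS : S.Nonempty) :
    (Finset.univ.filter (fun a => f a ∈ S)).Nonempty := by
  obtain ⟨b, hb⟩ := hS
  obtain ⟨a, rfl⟩ := hf b
  exact ⟨a, (Finset.mem_filter_univ a).2 hb⟩

/-- The preimage `f⁻¹` on nonempty finite subsets, the right adjoint of `nonemptyImage f`. It is a
`Finset.filter` because `Finset.preimage` requires injectivity. -/
def nonemptyPreimage (hf : Function.Surjective f) (S : {S : Finset β // S.Nonempty}) :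
    {T : Finset α // T.Nonempty} :=
  ⟨Finset.univ.filter (fun a => f a ∈ S.1), filter_mem_nonempty hf S.2⟩

theorem gc_nonemptyImage_nonemptyPreimage (hf : Function.Surjective f) :
    GaloisConnection (nonemptyImage f) (nonemptyPreimage hf) := fun T S =>
  show T.1.image f ⊆ S.1 ↔ T.1 ⊆ Finset.univ.filter (fun a => f a ∈ S.1) by
    rw [Finset.image_subset_iff]
    simp only [Finset.subset_iff, Finset.mem_filter_univ]

theorem imageFunctor_initial_general (hf : Function.Surjective f) :
    (nonemptyImage_monotone f).functor.Initial ∧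
      ∀ S : {S : Finset β // S.Nonempty},
        ∃ T : CostructuredArrow (nonemptyImage_monotone f).functor S,
          T.left.1 = Finset.univ.filter (fun a => f a ∈ S.1) ∧
          Nonempty (Limits.IsTerminal T) :=
  have adj := (gc_nonemptyImage_nonemptyPreimage hf).adjunction
  ⟨Functor.initial_of_adjunction adj, fun S =>
    ⟨CostructuredArrow.mk (adj.counit.app S), rfl, ⟨mkTerminalOfRightAdjoint _ adj S⟩⟩⟩

end ImagePreimage

theorem lastCodegeneracy_castSucc (n : ℕ) (hn : 1 ≤ n) (i : Fin n) :
    lastCodegeneracy n hn i.castSucc = i :=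
  dif_pos i.isLt

theorem lastCodegeneracy_surjective (n : ℕ) (hn : 1 ≤ n) :
    Function.Surjective (lastCodegeneracy n hn) :=
  Function.RightInverse.surjective (lastCodegeneracy_castSucc n hn)

/-- The functor `i_n : P_ν[n] ⥤ P_ν[n-1]`, which changes occurrences of `n` in
a subset to `n-1`, is left cofinal (initial); indeed for every nonempty
`S ⊆ {0,…,n-1}` the costructured arrow category has a terminal object, namely
the preimage of `S`. -/
theorem imageFunctor_initial (n : ℕ) (hn : 1 ≤ n) :
    (imageFunctor n hn).Initial ∧
      ∀ S : NonemptySubsetPoset n,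
        ∃ T : CostructuredArrow (imageFunctor n hn) S,
          T.left.1 = Finset.univ.filter (fun i => lastCodegeneracy n hn i ∈ S.1) ∧
          Nonempty (Limits.IsTerminal T) :=
  imageFunctor_initial_general (lastCodegeneracy_surjective n hn)
end

section
/- Fix n ≥ 1. In ℝⁿ (as functions Fin n → ℝ) define A = {t | Monotone t ∧ ∀ i, t i ∈ Set.Icc (−1) 1}, the set of weakly increasing n-tuples with entries in [−1,1], and B = {t | StrictMono t ∧ ∀ i, t i ∈ Set.Ioo (−1) 1}, the set of strictly increasing n-tuples with entries in (−1,1). For j : Fin (n+1) define the vertex v j : Fin n → ℝ by (v j) i = −1 if (i : ℕ) < (j : ℕ) and (v j) i = 1 otherwise. Then: (a) A is the closure of B; (b) A equals the convex hull convexHull ℝ (Set.range v) of the n+1 vertices; and (c) the family v is affinely independent (AffineIndependent ℝ v). Consequently A is an n-simplex with vertices v 0, …, v n. -/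
/-!
Any open segment from a weakly increasing tuple in `[a, b]` to a strictly increasing tuple in
`(a, b)` consists of strictly increasing tuples in `(a, b)`; this gives the closure.

For the simplex, pad `t` to `a, t₀, …, tₙ₋₁, b`. The `n + 1` successive gaps, divided by `b - a`,
are affine functions of `t` dual to the vertices, hence they are the barycentric coordinates with
respect to the vertices. So the convex hull of the vertices is where all gaps are nonnegative,
that is, where the padded tuple is monotone.
-/

open Set

section DualAffineFunctions

variable {ι k V : Type*} [DecidableEq ι]

lemma affineIndependent_of_dual {P : Type*} [Ring k] [AddCommGroup V] [Module k V] [AddTorsor V P]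
    {p : ι → P} {c : ι → P →ᵃ[k] k} (hc : ∀ i j, c i (p j) = if i = j then 1 else 0) :
    AffineIndependent k p := by
  have image_eq_single : AffineMap.pi c ∘ p = fun j ↦ Pi.single j 1 := by
    ext j i
    simp [hc, Pi.single_apply]
  refine .of_comp (AffineMap.pi c) ?_
  rw [image_eq_single]
  exact (Pi.linearIndependent_single_one ι k).affineIndependent

lemma convexHull_range_eq_setOf_dual_nonneg [Field k] [LinearOrder k] [IsStrictOrderedRing k]
    [AddCommGroup V] [Module k V] {p : ι → V} {c : ι → V →ᵃ[k] k}
    (hc : ∀ i j, c i (p j) = if i = j then 1 else 0) (hp : affineSpan k (range p) = ⊤) :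
    convexHull k (range p) = {x | ∀ i, 0 ≤ c i x} := by
  let basis : AffineBasis ι k V := ⟨p, affineIndependent_of_dual hc, hp⟩
  have coord_eq (i : ι) : basis.coord i = c i := by
    refine AffineMap.ext_on basis.tot ?_
    rintro _ ⟨j, rfl⟩
    rw [basis.coord_apply]
    exact (hc i j).symm
  calc convexHull k (range p) = {x | ∀ i, 0 ≤ basis.coord i x} := basis.convexHull_eq_nonneg_coord
    _ = {x | ∀ i, 0 ≤ c i x} := by simp only [coord_eq]

end DualAffineFunctions

section Configurations

variable {ι α : Type*} [Preorder α]

/-- The weakly increasing configurations in `[a, b]` indexed by `ι`; for `ι = Fin n` and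
`[a, b] = [-1, 1]` this is the compactification `C_n⟨𝕀, ∂⟩`. -/
def monotoneConfigurations (ι : Type*) [Preorder ι] (a b : α) : Set (ι → α) :=
  {t | Monotone t ∧ ∀ i, t i ∈ Icc a b}

/-- The strictly increasing configurations in `(a, b)` indexed by `ι`, i.e. the ordered component
of the configuration space of `(a, b)`. -/
def strictMonoConfigurations (ι : Type*) [Preorder ι] (a b : α) : Set (ι → α) :=
  {t | StrictMono t ∧ ∀ i, t i ∈ Ioo a b}

lemma strictMonoConfigurations_subset_monotoneConfigurations [PartialOrder ι] (a b : α) :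
    strictMonoConfigurations ι a b ⊆ monotoneConfigurations ι a b :=
  fun _ ht ↦ ⟨ht.1.monotone, fun i ↦ Ioo_subset_Icc_self (ht.2 i)⟩

lemma isClosed_monotoneConfigurations [Preorder ι] [TopologicalSpace α] [OrderClosedTopology α]
    (a b : α) : IsClosed (monotoneConfigurations ι a b) := by
  have eq_inter_box : monotoneConfigurations ι a b =
      {t | Monotone t} ∩ univ.pi fun _ ↦ Icc a b := by
    ext t
    simp only [monotoneConfigurations, mem_inter_iff, mem_univ_pi, mem_ofPred_eq]
  rw [eq_inter_box]
  exact isClosed_monotone.inter (isClosed_set_pi fun _ _ ↦ isClosed_Icc)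

end Configurations

lemma strictMonoConfigurations_nonempty {ι α : Type*} [LinearOrder ι] [Countable ι]
    [LinearOrder α] [DenselyOrdered α] {a b : α} (hab : a < b) :
    (strictMonoConfigurations ι a b).Nonempty := by
  have : Nontrivial (Ioo a b) := (Ioo_infinite hab).nontrivial.coe_sort
  obtain ⟨e⟩ := Order.embedding_from_countable_to_dense ι (Ioo a b)
  exact ⟨fun i ↦ e i, fun _ _ hij ↦ e.strictMono hij, fun i ↦ (e i).2⟩

section Closure

variable {ι 𝕜 : Type*} {a b : 𝕜}

lemma openSegment_subset_strictMonoConfigurations [Preorder ι] [Semiring 𝕜] [PartialOrder 𝕜]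
    [IsStrictOrderedRing 𝕜] {t u : ι → 𝕜}
    (ht : t ∈ monotoneConfigurations ι a b) (hu : u ∈ strictMonoConfigurations ι a b) :
    openSegment 𝕜 t u ⊆ strictMonoConfigurations ι a b := by
  rintro _ ⟨r, s, hr, hs, hrs, rfl⟩
  have combo_lt_combo {x x' y y' : 𝕜} (hx : x ≤ x') (hy : y < y') :
      r * x + s * y < r * x' + s * y' :=
    add_lt_add_of_le_of_lt (mul_le_mul_of_nonneg_left hx hr.le) (mul_lt_mul_of_pos_left hy hs)
  have combo_self (x : 𝕜) : r * x + s * x = x := by rw [← add_mul, hrs, one_mul]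
  refine ⟨fun i j hij ↦ combo_lt_combo (ht.1 hij.le) (hu.1 hij), fun i ↦ ⟨?_, ?_⟩⟩
  · exact (combo_self a).symm.trans_lt (combo_lt_combo (ht.2 i).1 (hu.2 i).1)
  · exact (combo_lt_combo (ht.2 i).2 (hu.2 i).2).trans_eq (combo_self b)

lemma closure_strictMonoConfigurations [LinearOrder ι] [Countable ι] [Field 𝕜] [LinearOrder 𝕜]
    [IsStrictOrderedRing 𝕜] [TopologicalSpace 𝕜] [OrderTopology 𝕜] (hab : a < b) :
    closure (strictMonoConfigurations ι a b) = monotoneConfigurations ι a b := by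
  refine (closure_minimal (strictMonoConfigurations_subset_monotoneConfigurations a b)
    (isClosed_monotoneConfigurations a b)).antisymm fun t ht ↦ ?_
  obtain ⟨u, hu⟩ := strictMonoConfigurations_nonempty (ι := ι) hab
  exact closure_mono (openSegment_subset_strictMonoConfigurations ht hu)
    (segment_subset_closure_openSegment (left_mem_segment 𝕜 t u))

end Closure

section Simplex

variable {n : ℕ} {α 𝕜 : Type*}

/-- The tuple `t` with the endpoints `a` and `b` added in front and at the end, so that
monotonicity also encodes the bounds `a ≤ t i ≤ b`. -/
def padded (a b : α) (t : Fin n → α) : Fin (n + 2) → α :=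
  Fin.cons (α := fun _ ↦ α) a (Fin.snoc (α := fun _ ↦ α) t b)

@[simp]
lemma padded_zero (a b : α) (t : Fin n → α) : padded a b t 0 = a := rfl

@[simp]
lemma padded_last (a b : α) (t : Fin n → α) : padded a b t (Fin.last (n + 1)) = b := by
  simp [padded, ← Fin.succ_last]

@[simp]
lemma padded_castSucc_succ (a b : α) (t : Fin n → α) (i : Fin n) :
    padded a b t i.castSucc.succ = t i := by
  simp [padded]

lemma endpoint_cases {motive : Fin (n + 2) → Prop} (zero : motive 0)
    (castSucc_succ : ∀ i : Fin n, motive i.castSucc.succ) (last : motive (Fin.last (n + 1)))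
    (k : Fin (n + 2)) : motive k :=
  k.cases zero fun l ↦ l.lastCases last castSucc_succ

lemma monotone_padded_iff [Preorder α] {a b : α} (hab : a ≤ b) {t : Fin n → α} :
    Monotone (padded a b t) ↔ t ∈ monotoneConfigurations (Fin n) a b := by
  constructor
  · intro h
    refine ⟨fun i j hij ↦ ?_, fun i ↦ ⟨?_, ?_⟩⟩
    · simpa using h (Fin.succ_le_succ_iff.2 (Fin.castSucc_le_castSucc_iff.2 hij))
    · simpa using h (Fin.zero_le i.castSucc.succ)
    · simpa using h (Fin.le_last i.castSucc.succ)
  · rintro ⟨ht, htI⟩ k l hkl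
    have mem_Icc (m : Fin (n + 2)) : padded a b t m ∈ Icc a b := by
      induction m using endpoint_cases with
      | zero => simp [hab]
      | castSucc_succ i => simpa using htI i
      | last => simp [hab]
    induction k using endpoint_cases with
    | zero => exact (mem_Icc l).1
    | castSucc_succ i =>
      induction l using endpoint_cases with
      | zero => exact absurd hkl (Fin.succ_pos i.castSucc).not_ge
      | castSucc_succ j => simpa using ht (by simpa using hkl)
      | last => simpa using (htI i).2
    | last => rw [Fin.last_le_iff.1 hkl]

/-- The `j`-th vertex of the simplex of weakly increasing tuples in `[a, b]`: the first `j`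
points lie at `a`, the others at `b`. -/
def stepVertex (a b : α) (j : Fin (n + 1)) : Fin n → α :=
  fun i ↦ if i.castSucc < j then a else b

lemma padded_stepVertex (a b : α) (j : Fin (n + 1)) (k : Fin (n + 2)) :
    padded a b (stepVertex a b j) k = if k ≤ j.castSucc then a else b := by
  induction k using endpoint_cases with
  | zero => simp
  | castSucc_succ i => simp [stepVertex, Fin.succ_le_castSucc_iff]
  | last => simp [Fin.last_le_iff, Fin.castSucc_ne_last]

lemma padded_affineMap_apply [Ring 𝕜] (a b : 𝕜) (t : Fin n → 𝕜) (k : Fin (n + 2)) :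
    padded (AffineMap.const 𝕜 (Fin n → 𝕜) a) (AffineMap.const 𝕜 _ b) AffineMap.proj k t =
      padded a b t k := by
  induction k using endpoint_cases <;> simp

variable [Field 𝕜]

/-- The `j`-th gap of `padded a b t` relative to the length `b - a`, as an affine function of `t`;
these are the barycentric coordinates with respect to the vertices `stepVertex a b j`. -/
def gapCoord (a b : 𝕜) (j : Fin (n + 1)) : (Fin n → 𝕜) →ᵃ[𝕜] 𝕜 :=
  let entry := padded (AffineMap.const 𝕜 _ a) (AffineMap.const 𝕜 _ b) AffineMap.proj
  (b - a)⁻¹ • (entry j.succ - entry j.castSucc)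

lemma gapCoord_apply (a b : 𝕜) (j : Fin (n + 1)) (t : Fin n → 𝕜) :
    gapCoord a b j t = (b - a)⁻¹ * (padded a b t j.succ - padded a b t j.castSucc) := by
  simp [gapCoord, padded_affineMap_apply]

lemma gapCoord_stepVertex {a b : 𝕜} (hab : a ≠ b) (i j : Fin (n + 1)) :
    gapCoord a b i (stepVertex a b j) = if i = j then 1 else 0 := by
  rw [gapCoord_apply, padded_stepVertex, padded_stepVertex]
  have length_ne_zero : b - a ≠ 0 := sub_ne_zero.2 hab.symm
  simp only [Fin.succ_le_castSucc_iff, Fin.castSucc_le_castSucc_iff]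
  rcases lt_trichotomy i j with h | rfl | h
  · simp [h, h.le, h.ne]
  · simp [length_ne_zero]
  · simp [h.not_ge, h.not_gt, h.ne']

lemma affineIndependent_stepVertex {a b : 𝕜} (hab : a ≠ b) :
    AffineIndependent 𝕜 (stepVertex a b : Fin (n + 1) → Fin n → 𝕜) :=
  affineIndependent_of_dual (gapCoord_stepVertex hab)

lemma affineSpan_range_stepVertex {a b : 𝕜} (hab : a ≠ b) :
    affineSpan 𝕜 (range (stepVertex a b : Fin (n + 1) → Fin n → 𝕜)) = ⊤ := by
  simp [(affineIndependent_stepVertex hab).affineSpan_eq_top_iff_card_eq_finrank_add_one]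

variable [LinearOrder 𝕜] [IsStrictOrderedRing 𝕜] {a b : 𝕜}

lemma gapCoord_nonneg_iff (hab : a < b) {t : Fin n → 𝕜} :
    (∀ j, 0 ≤ gapCoord a b j t) ↔ t ∈ monotoneConfigurations (Fin n) a b := by
  simp_rw [← monotone_padded_iff hab.le, Fin.monotone_iff_le_succ, gapCoord_apply,
    mul_nonneg_iff_of_pos_left (inv_pos.2 (sub_pos.2 hab)), sub_nonneg]

lemma convexHull_range_stepVertex (hab : a < b) :
    convexHull 𝕜 (range (stepVertex a b)) = monotoneConfigurations (Fin n) a b := by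
  rw [convexHull_range_eq_setOf_dual_nonneg (gapCoord_stepVertex hab.ne)
    (affineSpan_range_stepVertex hab.ne)]
  exact Set.ext fun _ ↦ gapCoord_nonneg_iff hab

end Simplex

theorem ordered_configurations_in_interval_form_simplex_general
    {𝕜 : Type*} [Field 𝕜] [LinearOrder 𝕜] [IsStrictOrderedRing 𝕜] [TopologicalSpace 𝕜]
    [OrderTopology 𝕜] (n : ℕ) {a b : 𝕜} (hab : a < b) :
    monotoneConfigurations (Fin n) a b = closure (strictMonoConfigurations (Fin n) a b) ∧
      monotoneConfigurations (Fin n) a b = convexHull 𝕜 (range (stepVertex a b)) ∧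
      AffineIndependent 𝕜 (stepVertex a b : Fin (n + 1) → Fin n → 𝕜) :=
  ⟨(closure_strictMonoConfigurations hab).symm, (convexHull_range_stepVertex hab).symm,
    affineIndependent_stepVertex hab.ne⟩

/-- The set of weakly increasing `n`-tuples in `[-1,1]` is the closure of the
set of strictly increasing `n`-tuples in `(-1,1)`, and is the `n`-simplex with
vertices `v 0, …, v n`, where `(v j) i = -1` if `i < j` and `1` otherwise. -/
theorem ordered_configurations_in_interval_form_simplex
    (n : ℕ) (hn : 1 ≤ n)
    (A B : Set (Fin n → ℝ)) (v : Fin (n + 1) → Fin n → ℝ)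
    (hA : A = {t | Monotone t ∧ ∀ i, t i ∈ Set.Icc (-1 : ℝ) 1})
    (hB : B = {t | StrictMono t ∧ ∀ i, t i ∈ Set.Ioo (-1 : ℝ) 1})
    (hv : ∀ j i, v j i = if (i : ℕ) < (j : ℕ) then -1 else 1) :
    A = closure B ∧ A = convexHull ℝ (Set.range v) ∧ AffineIndependent ℝ v := by
  obtain rfl : v = stepVertex (-1) 1 := funext₂ hv
  subst hA hB
  exact ordered_configurations_in_interval_form_simplex_general n (by norm_num)
end

section
/- Fix n ≥ 1 and work in the free Lie algebra L = FreeLieAlgebra ℤ (Fin (n+1)) over the integers on generators x_i = FreeLieAlgebra.of i for i : Fin (n+1). For each permutation σ : Equiv.Perm (Fin n), let w σ ∈ L be the right-normed iterated bracket w σ = ⁅x_{σ(0)}, ⁅x_{σ(1)}, …, ⁅x_{σ(n−1)}, x_n⁆ … ⁆⁆, where each index σ(i) ∈ Fin n is viewed in Fin (n+1) via Fin.castSucc. Then the family w : Equiv.Perm (Fin n) → L is linearly independent over ℤ; in particular these n! elements span a free ℤ-submodule of L of rank n!. -/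
/-- The right-normed iterated bracket
`⁅x_{σ 0}, ⁅x_{σ 1}, …, ⁅x_{σ (n-1)}, x_n⁆ … ⁆⁆` in the free Lie algebra over
`ℤ` on generators `x_0, …, x_n`. -/
noncomputable def rightNormedBracket (n : ℕ) (σ : Equiv.Perm (Fin n)) :
    FreeLieAlgebra ℤ (Fin (n + 1)) :=
  (List.finRange n).foldr
    (fun i acc => ⁅FreeLieAlgebra.of ℤ (Fin.castSucc (σ i)), acc⁆)
    (FreeLieAlgebra.of ℤ (Fin.last n))

/-!
Send a distinguished generator `y` to the `2 × 2` matrix unit `E₀₁`, and every other generator `x`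
to `x E₀₀`, with entries in the free associative algebra. Since `E₀₁ E₀₀ = 0`, bracketing with
`x E₀₀` acts on `a E₀₁` as left multiplication by `x`. Hence the right-normed bracket of a word `w`
ending in `y` goes to `w E₀₁`, and distinct words are linearly independent in the free associative
algebra.
-/

/-- The right-normed iterated bracket `⁅x₁, ⁅x₂, …, ⁅xₖ, y⁆ … ⁆⁆` of free generators, for a word
`w = x₁ x₂ ⋯ xₖ` and a last letter `y`, which is kept apart from `w`. -/
noncomputable def wordBracket (R : Type*) [CommRing R] {X : Type*} (w : List X) (y : X) :
    FreeLieAlgebra R X :=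
  w.foldr (fun x u => ⁅FreeLieAlgebra.of R x, u⁆) (FreeLieAlgebra.of R y)

theorem freeAlgebra_basisFreeMonoid_ofList (R : Type*) [CommSemiring R] {X : Type*} (w : List X) :
    FreeAlgebra.basisFreeMonoid R X (.ofList w) = (w.map (FreeAlgebra.ι R)).prod :=
  calc FreeAlgebra.basisFreeMonoid R X (.ofList w)
      = MonoidAlgebra.lift R _ _ (FreeMonoid.lift (FreeAlgebra.ι R)) (.single (.ofList w) 1) := by
        simp [FreeAlgebra.basisFreeMonoid, FreeAlgebra.equivMonoidAlgebraFreeMonoid]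
    _ = (w.map (FreeAlgebra.ι R)).prod := by
        rw [MonoidAlgebra.lift_single, one_smul, FreeMonoid.lift_ofList]

theorem linearIndependent_prod_map_freeAlgebra_ι (R X : Type*) [CommSemiring R] :
    LinearIndependent R fun w : List X => (w.map (FreeAlgebra.ι R)).prod := by
  simpa only [Function.comp_def, freeAlgebra_basisFreeMonoid_ofList] using
    (FreeAlgebra.basisFreeMonoid R X).linearIndependent.comp _ FreeMonoid.ofList.injective

section MatrixRepresentation

open FreeLieAlgebra Matrix

attribute [local instance] LieRing.ofAssociativeRing

theorem lie_single_same_single_of_ne {n A : Type*} [Fintype n] [DecidableEq n] [Ring A] {i j : n}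
    (hij : i ≠ j) (a b : A) : ⁅single i i a, single i j b⁆ = single i j (a * b) := by
  rw [LieRing.of_associative_ring_bracket, single_mul_single_same,
    single_mul_single_of_ne _ _ _ _ hij.symm, sub_zero]

variable (R : Type*) [CommRing R] {X : Type*}

/-- The matrix representation of the free Lie algebra that sends the generator `y` to `E₀₁` and
every other generator `x` to `f x E₀₀`. It is used to read off associative words from brackets. -/
noncomputable def matrixRep [DecidableEq X] {A : Type*} [Ring A] [Algebra R A] (f : X → A) (y : X) :
    FreeLieAlgebra R X →ₗ⁅R⁆ Matrix (Fin 2) (Fin 2) A :=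
  lift R fun x => if x = y then single 0 1 1 else single 0 0 (f x)

theorem matrixRep_wordBracket [DecidableEq X] {A : Type*} [Ring A] [Algebra R A]
    (f : X → A) {y : X} {w : List X} (hy : y ∉ w) :
    matrixRep R f y (wordBracket R w y) = single 0 1 (w.map f).prod := by
  induction w with
  | nil => simp [matrixRep, wordBracket]
  | cons x w ih =>
    obtain ⟨hyx, hyw⟩ := List.ne_and_not_mem_of_not_mem_cons hy
    calc matrixRep R f y (wordBracket R (x :: w) y)
        = ⁅matrixRep R f y (of R x), matrixRep R f y (wordBracket R w y)⁆ := LieHom.map_lie _ _ _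
      _ = ⁅(single 0 0 (f x) : Matrix (Fin 2) (Fin 2) A), single 0 1 (w.map f).prod⁆ := by
        rw [ih hyw, matrixRep, lift_of_apply, if_neg (Ne.symm hyx)]
      _ = single 0 1 ((x :: w).map f).prod := by
        rw [lie_single_same_single_of_ne zero_ne_one, List.map_cons, List.prod_cons]

theorem rightNormedBrackets_linearIndependent_general (y : X) :
    LinearIndependent R fun w : {w : List X // y ∉ w} => wordBracket R w.1 y := by
  classical
  let upperRight : FreeLieAlgebra R X →ₗ[R] FreeAlgebra R X :=
    Matrix.entryLinearMap R _ 0 1 ∘ₗ (matrixRep R (FreeAlgebra.ι R) y).toLinearMap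
  have upperRight_wordBracket (w : {w : List X // y ∉ w}) :
      upperRight (wordBracket R w.1 y) = (w.1.map (FreeAlgebra.ι R)).prod := by
    simp [upperRight, matrixRep_wordBracket R _ w.2]
  refine .of_comp upperRight ?_
  simpa only [Function.comp_def, upperRight_wordBracket] using
    (linearIndependent_prod_map_freeAlgebra_ι R X).comp _ Subtype.val_injective

end MatrixRepresentation

/-- The word `σ(0) σ(1) ⋯ σ(n-1)` of a permutation, in the first `n` of `n + 1` letters. -/
def permWord {n : ℕ} (σ : Equiv.Perm (Fin n)) : List (Fin (n + 1)) :=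
  List.ofFn fun i => (σ i).castSucc

theorem permWord_injective (n : ℕ) : Function.Injective (permWord (n := n)) := fun _ _ h =>
  Equiv.ext fun i => Fin.castSucc_injective n (congrFun (List.ofFn_injective h) i)

theorem last_notMem_permWord {n : ℕ} (σ : Equiv.Perm (Fin n)) : Fin.last n ∉ permWord σ := by
  simp [permWord, List.mem_ofFn, Fin.castSucc_ne_last]

theorem rightNormedBracket_eq_wordBracket (n : ℕ) (σ : Equiv.Perm (Fin n)) :
    rightNormedBracket n σ = wordBracket ℤ (permWord σ) (Fin.last n) := by
  rw [rightNormedBracket, wordBracket, permWord, List.ofFn_eq_map, List.foldr_map]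

/-- The `n!` right-normed multilinear brackets, in which the last generator is
fixed in last position and the remaining `n` generators are permuted, are
linearly independent over `ℤ` in the free Lie ring. -/
theorem rightNormedBrackets_linearIndependent (n : ℕ) (hn : 1 ≤ n) :
    LinearIndependent ℤ (fun σ : Equiv.Perm (Fin n) => rightNormedBracket n σ) := by
  -- `convert!` also matches the `ℤ`-action of the coefficient ring with that of the additive group.
  convert! (rightNormedBrackets_linearIndependent_general ℤ (Fin.last n)).comp
    (fun σ => ⟨permWord σ, last_notMem_permWord σ⟩)
    (fun _ _ h => permWord_injective n (congrArg Subtype.val h)) using 2 with σ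
  exact rightNormedBracket_eq_wordBracket n σ
end
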